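/- arXiv:2509.24337 — 2 statements merged into one kernel-verified Lean document; each statement's English description precedes it below -/
import Mathlib

section
/- Suppose that R(z) is invertible for every z in an open annulus containing the unit circle 𝕋. Then R admits a left canonical Wiener–Hopf factorization if and only if there exists a Q̃ ∈ B(X₋, X₊) such that δ − γ₊Q̃β₋ is invertible, Q̃ satisfies the Riccati equation Q̃ = α₊Q̃α₋ + (β₊ − α₊Q̃β₋)(δ − γ₊Q̃β₋)⁻¹(γ₋ − γ₊Q̃α₋), and Q̃ is stabilizing in the sense that the operators α̃₋° := α₋ − β₋(δ − γ₊Q̃β₋)⁻¹(γ₋ − γ₊Q̃α₋) and α̃₊° := α₊ − (β₊ − α₊Q̃β₋)(δ − γ₊Q̃β₋)⁻¹γ₊ both have spectrum contained in the open unit disc 𝔻. Moreover, there exists at most one such stabilizing solution Q̃. -/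
open Metric ContinuousLinearMap

noncomputable section

variable {U Xp Xm : Type*}
  [NormedAddCommGroup U] [InnerProductSpace ℂ U] [CompleteSpace U]
  [NormedAddCommGroup Xp] [InnerProductSpace ℂ Xp] [CompleteSpace Xp]
  [NormedAddCommGroup Xm] [InnerProductSpace ℂ Xm] [CompleteSpace Xm]

/-- The stable representation
`R(z) = δ + z·γ₊(I − zα₊)⁻¹β₊ + γ₋(zI − α₋)⁻¹β₋`. -/
def Rfun (δ : U →L[ℂ] U) (γp : Xp →L[ℂ] U) (αp : Xp →L[ℂ] Xp) (βp : U →L[ℂ] Xp)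
    (γm : Xm →L[ℂ] U) (αm : Xm →L[ℂ] Xm) (βm : U →L[ℂ] Xm) (z : ℂ) : U →L[ℂ] U :=
  δ + z • ((γp ∘L Ring.inverse (1 - z • αp)) ∘L βp) +
    (γm ∘L Ring.inverse (z • (1 : Xm →L[ℂ] Xm) - αm)) ∘L βm

/-- A `B(U)`-valued function of "plus type": analytic on an open neighborhood of the
closed unit disc, with invertible values and analytic pointwise inverse there. -/
def PlusFactor {E : Type*} [NormedAddCommGroup E] [InnerProductSpace ℂ E] [CompleteSpace E]
    (V : ℂ → (E →L[ℂ] E)) : Prop :=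
  ∃ S : Set ℂ, IsOpen S ∧ closedBall (0 : ℂ) 1 ⊆ S ∧
    AnalyticOnNhd ℂ V S ∧ (∀ z ∈ S, IsUnit (V z)) ∧
    AnalyticOnNhd ℂ (fun z => Ring.inverse (V z)) S

/-- A `B(U)`-valued function of "minus type" on the complement of the open unit disc:
`z ↦ V(1/z)` (with the value at `0` corresponding to `V(∞)`) extends to a function
that is analytic on an open neighborhood of the closed unit disc, with invertible
values and analytic pointwise inverse there. -/
def MinusFactor {E : Type*} [NormedAddCommGroup E] [InnerProductSpace ℂ E] [CompleteSpace E]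
    (V : ℂ → (E →L[ℂ] E)) : Prop :=
  ∃ Vhat : ℂ → (E →L[ℂ] E), PlusFactor Vhat ∧ ∀ z : ℂ, 1 ≤ ‖z‖ → V z = Vhat z⁻¹

/-- A right canonical Wiener–Hopf factorization `R(z) = V₋(z)V₊(z)` on the unit circle. -/
def RightCanonicalWH {E : Type*} [NormedAddCommGroup E] [InnerProductSpace ℂ E]
    [CompleteSpace E] (R : ℂ → (E →L[ℂ] E)) : Prop :=
  ∃ Vm Vp : ℂ → (E →L[ℂ] E), MinusFactor Vm ∧ PlusFactor Vp ∧
    ∀ z : ℂ, ‖z‖ = 1 → R z = Vm z * Vp z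

/-- A left canonical Wiener–Hopf factorization `R(z) = W₊(z)W₋(z)` on the unit circle. -/
def LeftCanonicalWH {E : Type*} [NormedAddCommGroup E] [InnerProductSpace ℂ E]
    [CompleteSpace E] (R : ℂ → (E →L[ℂ] E)) : Prop :=
  ∃ Wp Wm : ℂ → (E →L[ℂ] E), PlusFactor Wp ∧ MinusFactor Wm ∧
    ∀ z : ℂ, ‖z‖ = 1 → R z = Wp z * Wm z

/-- `Q̃` solves the left Riccati equation:
`δ − γ₊Q̃β₋` is invertible and
`Q̃ = α₊Q̃α₋ + (β₊ − α₊Q̃β₋)(δ − γ₊Q̃β₋)⁻¹(γ₋ − γ₊Q̃α₋)`. -/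
def SolvesLeftRiccati (δ : U →L[ℂ] U) (γp : Xp →L[ℂ] U) (αp : Xp →L[ℂ] Xp)
    (βp : U →L[ℂ] Xp) (γm : Xm →L[ℂ] U) (αm : Xm →L[ℂ] Xm) (βm : U →L[ℂ] Xm)
    (Qt : Xm →L[ℂ] Xp) : Prop :=
  IsUnit (δ - (γp ∘L Qt) ∘L βm) ∧
    Qt = (αp ∘L Qt) ∘L αm +
      ((βp - (αp ∘L Qt) ∘L βm) ∘L Ring.inverse (δ - (γp ∘L Qt) ∘L βm)) ∘L
        (γm - (γp ∘L Qt) ∘L αm)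

/-- A solution `Q̃` of the left Riccati equation is stabilizing if
`α̃₋° := α₋ − β₋(δ − γ₊Q̃β₋)⁻¹(γ₋ − γ₊Q̃α₋)` and
`α̃₊° := α₊ − (β₊ − α₊Q̃β₋)(δ − γ₊Q̃β₋)⁻¹γ₊` have spectrum in the open unit disc. -/
def StabilizingLeftRiccati (δ : U →L[ℂ] U) (γp : Xp →L[ℂ] U) (αp : Xp →L[ℂ] Xp)
    (βp : U →L[ℂ] Xp) (γm : Xm →L[ℂ] U) (αm : Xm →L[ℂ] Xm) (βm : U →L[ℂ] Xm)
    (Qt : Xm →L[ℂ] Xp) : Prop :=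
  spectrum ℂ
      (αm - (βm ∘L Ring.inverse (δ - (γp ∘L Qt) ∘L βm)) ∘L (γm - (γp ∘L Qt) ∘L αm))
      ⊆ ball (0 : ℂ) 1 ∧
    spectrum ℂ
      (αp - ((βp - (αp ∘L Qt) ∘L βm) ∘L Ring.inverse (δ - (γp ∘L Qt) ∘L βm)) ∘L γp)
      ⊆ ball (0 : ℂ) 1

/-!
On the unit circle `R z = P z * M z⁻¹` with `P` and `M` analytic and invertible on the closed disc.
A function analytic on the closed disc that agrees on the circle with a function of `z⁻¹` analytic
on the closed disc is constant (Liouville), so the two halves of `R` can be separated.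
Dividing `P⁻¹ γ₋` by `z - α₋` with constant remainder `Γ` therefore identifies `M` with the transfer
function `1 + z Γ (1 - z α₋)⁻¹ β₋`. Its invertibility on the disc is the stability of `α₋ - β₋ Γ`,
so the Stein equation `Q = α₊ Q (α₋ - β₋ Γ) + β₊ Γ` is solvable, and a second separation identifies
`P` with a transfer function with state operator `α₊`. The Riccati equation for `Q` says exactly
that the product of these two transfer functions is `R`, and the operators `α̃₊°`, `α̃₋°` are the
state operators of their inverses, so that stability of the latter is invertibility of the factors.
-/

section RingInverse

lemma inverse_smul_one_sub {𝕜 A : Type*} [Field 𝕜] [Ring A] [Algebra 𝕜 A] {z : 𝕜} (hz : z ≠ 0)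
    (a : A) : Ring.inverse (z • 1 - a) = z⁻¹ • Ring.inverse (1 - z⁻¹ • a) := by
  rw [eq_inv_smul_iff₀ hz]
  simpa [resolvent, Algebra.algebraMap_eq_smul_one, Units.smul_def] using
    spectrum.units_smul_resolvent_self (r := Units.mk0 z hz) (a := a)

lemma isUnit_smul_one_sub_iff {𝕜 A : Type*} [Field 𝕜] [Ring A] [Algebra 𝕜 A] {z : 𝕜} (hz : z ≠ 0)
    {a : A} : IsUnit (z • 1 - a) ↔ IsUnit (1 - z⁻¹ • a) := by
  simpa [Units.smul_def] using IsUnit.smul_sub_iff_sub_inv_smul (r := Units.mk0 z hz) (a := a)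

lemma isUnit_smul_one_sub {𝕜 A : Type*} [NormedField 𝕜] [Ring A] [Algebra 𝕜 A] {a : A}
    (ha : spectrum 𝕜 a ⊆ ball 0 1) {z : 𝕜} (hz : 1 ≤ ‖z‖) : IsUnit (z • 1 - a) := by
  simpa only [Algebra.algebraMap_eq_smul_one] using
    spectrum.notMem_iff.1 fun h => (mem_ball_zero_iff.1 (ha h)).not_ge hz

lemma spectrum_subset_ball_iff {𝕜 A : Type*} [NormedField 𝕜] [Ring A] [Algebra 𝕜 A] {a : A} :
    spectrum 𝕜 a ⊆ ball 0 1 ↔ ∀ z ∈ closedBall (0 : 𝕜) 1, IsUnit (1 - z • a) := by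
  refine ⟨fun ha z hz => ?_, fun h z hz => ?_⟩
  · obtain rfl | hz0 := eq_or_ne z 0
    · simp
    · have hz1 : 1 ≤ ‖z⁻¹‖ := by
        rw [norm_inv]
        exact (one_le_inv₀ (norm_pos_iff.2 hz0)).2 (by simpa using hz)
      simpa only [inv_inv] using
        (isUnit_smul_one_sub_iff (inv_ne_zero hz0)).1 (isUnit_smul_one_sub ha hz1)
  · by_contra hz1
    rw [mem_ball_zero_iff, not_lt] at hz1
    have hz0 : z ≠ 0 := norm_pos_iff.1 (one_pos.trans_le hz1)
    refine hz ?_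
    rw [spectrum.mem_resolventSet_iff, Algebra.algebraMap_eq_smul_one,
      isUnit_smul_one_sub_iff hz0]
    exact h _ (by simpa using inv_le_one_of_one_le₀ hz1)

end RingInverse

section TopologicalModule

variable {R M N : Type*} [Ring R]
  [AddCommGroup M] [TopologicalSpace M] [IsTopologicalAddGroup M] [Module R M]
  [AddCommGroup N] [TopologicalSpace N] [Module R N]

lemma inverse_comp_cancel_left {A : M →L[R] M} (hA : IsUnit A) (B : N →L[R] M) :
    Ring.inverse A ∘L (A ∘L B) = B := by
  rw [← ContinuousLinearMap.comp_assoc, ← mul_def, Ring.inverse_mul_cancel _ hA, one_def, id_comp]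

lemma comp_inverse_cancel_left {A : M →L[R] M} (hA : IsUnit A) (B : N →L[R] M) :
    A ∘L (Ring.inverse A ∘L B) = B := by
  rw [← ContinuousLinearMap.comp_assoc, ← mul_def, Ring.mul_inverse_cancel _ hA, one_def, id_comp]

lemma comp_inverse_cancel_right {A : M →L[R] M} (hA : IsUnit A) (C : M →L[R] N) :
    (C ∘L Ring.inverse A) ∘L A = C := by
  rw [ContinuousLinearMap.comp_assoc, ← mul_def, Ring.inverse_mul_cancel _ hA, one_def, comp_id]

lemma add_comp_eq_mul_one_add {A : M →L[R] M} (hA : IsUnit A) (B : N →L[R] M) (C : M →L[R] N) :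
    A + B ∘L C = A * (1 + (Ring.inverse A ∘L B) ∘L C) := by
  rw [mul_add, mul_one, mul_def, ContinuousLinearMap.comp_assoc, comp_inverse_cancel_left hA]

variable [IsTopologicalAddGroup N]

lemma isUnit_one_add_comp_of_isUnit {B : M →L[R] N} {C : N →L[R] M} (h : IsUnit (1 + C ∘L B)) :
    IsUnit (1 + B ∘L C) := by
  set S := Ring.inverse (1 + C ∘L B)
  have hr (y : M) : S y + C (B (S y)) = y := DFunLike.congr_fun (Ring.mul_inverse_cancel _ h) y
  have hl (y : M) : S y + S (C (B y)) = y := by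
    rw [← map_add]
    exact DFunLike.congr_fun (Ring.inverse_mul_cancel _ h) y
  refine ⟨⟨1 + B ∘L C, 1 - B ∘L S ∘L C, ?_, ?_⟩, rfl⟩ <;> ext x
  · change x - B (S (C x)) + B (C (x - B (S (C x)))) = x
    rw [map_sub C, sub_eq_iff_eq_add.2 (hr (C x)).symm, sub_add_cancel]
  · change x + B (C x) - B (S (C (x + B (C x)))) = x
    rw [map_add C, map_add S, hl, add_sub_cancel_right]

lemma isUnit_one_add_comp_comm {B : M →L[R] N} {C : N →L[R] M} :
    IsUnit (1 + C ∘L B) ↔ IsUnit (1 + B ∘L C) :=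
  ⟨isUnit_one_add_comp_of_isUnit, isUnit_one_add_comp_of_isUnit⟩

lemma isUnit_add_comp_inverse_comp_iff {A : N →L[R] N} {D : M →L[R] M} (hA : IsUnit A)
    (hD : IsUnit D) {B : M →L[R] N} {C : N →L[R] M} :
    IsUnit (D + (C ∘L Ring.inverse A) ∘L B) ↔ IsUnit (A + (B ∘L Ring.inverse D) ∘L C) := by
  rw [ContinuousLinearMap.comp_assoc, ContinuousLinearMap.comp_assoc, add_comp_eq_mul_one_add hD,
    add_comp_eq_mul_one_add hA, hD.mul_left_iff, hA.mul_left_iff, isUnit_one_add_comp_comm]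

end TopologicalModule

section Liouville

variable {E : Type*} [NormedAddCommGroup E] [NormedSpace ℂ E] [CompleteSpace E]

lemma one_sub_mul_ne_zero {𝕜 : Type*} [NormedField 𝕜] {w ζ : 𝕜} (hw : ‖w‖ < 1) (hζ : ‖ζ‖ ≤ 1) :
    1 - w * ζ ≠ 0 := by
  intro h
  have hlt : ‖w * ζ‖ < 1 := by
    rw [norm_mul]
    exact mul_lt_one_of_nonneg_of_lt_one_left (norm_nonneg _) hw hζ
  rw [← sub_eq_zero.1 h, norm_one] at hlt
  exact hlt.false

lemma eqOn_const_of_eq_comp_inv {f g : ℂ → E} (hf : DiffContOnCl ℂ f (ball 0 1))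
    (hg : DiffContOnCl ℂ g (ball 0 1)) (hfg : ∀ z : ℂ, ‖z‖ = 1 → f z = g z⁻¹) :
    Set.EqOn f (fun _ => g 0) (closedBall 0 1) := by
  have hball : ∀ w ∈ ball (0 : ℂ) 1, f w = g 0 := by
    intro w hw
    have hne : ∀ ζ ∈ closure (ball (0 : ℂ) 1), 1 - w * ζ ≠ 0 := by
      rw [closure_ball _ one_ne_zero]
      exact fun ζ hζ => one_sub_mul_ne_zero (by simpa using hw) (by simpa using hζ)
    have hkernel : DiffContOnCl ℂ (fun ζ => (1 - w * ζ)⁻¹ • g ζ) (ball 0 1) :=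
      ((differentiable_id.const_mul w).const_sub 1).diffContOnCl.inv hne |>.smul hg
    calc f w = Real.circleAverage (fun z => ((z - 0) / (z - w)) • f z) 0 1 :=
          (DiffContOnCl.circleAverage_smul_div (by simpa using hf) (by simpa using hw)).symm
      _ = Real.circleAverage (fun z => (1 - w * z⁻¹)⁻¹ • g z⁻¹) 0 1 := by
          refine Real.circleAverage_congr_sphere fun z hz => ?_
          have hz1 : ‖z‖ = 1 := by simpa using hz
          have hz0 : z ≠ 0 := norm_ne_zero_iff.1 (hz1 ▸ one_ne_zero)
          have hcauchy : (1 - w * z⁻¹)⁻¹ = (z - 0) / (z - w) := by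
            rw [sub_zero, ← inv_div, sub_div, div_self hz0, div_eq_mul_inv]
          simp only [hcauchy, hfg z hz1]
      _ = Real.circleAverage (fun ζ => (1 - w * ζ)⁻¹ • g ζ) 0 1 :=
          Real.circleAverage_zero_one_congr_inv (f := fun ζ => (1 - w * ζ)⁻¹ • g ζ)
      _ = g 0 := by
          rw [DiffContOnCl.circleAverage (by simpa using hkernel)]
          simp
  rw [← closure_ball _ one_ne_zero]
  exact Set.EqOn.of_subset_closure hball hf.continuousOn continuousOn_const subset_closure
    subset_rfl

lemma eqOn_zero_of_eq_inv_smul {f g : ℂ → E} (hf : AnalyticOnNhd ℂ f (closedBall 0 1))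
    (hg : AnalyticOnNhd ℂ g (closedBall 0 1))
    (hfg : ∀ z : ℂ, ‖z‖ = 1 → f z = z⁻¹ • g z⁻¹) : Set.EqOn f 0 (closedBall 0 1) := by
  have hsmul : AnalyticOnNhd ℂ (fun w => w • g w) (closedBall 0 1) := analyticOnNhd_id.smul hg
  intro w hw
  simpa using eqOn_const_of_eq_comp_inv (hf.differentiableOn.diffContOnCl_ball subset_rfl)
    (hsmul.differentiableOn.diffContOnCl_ball subset_rfl) hfg hw

end Liouville

section Analytic

@[fun_prop]
lemma analyticAt_clm_comp {𝕜 E F G : Type*} [NontriviallyNormedField 𝕜]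
    [NormedAddCommGroup E] [NormedSpace 𝕜 E] [NormedAddCommGroup F] [NormedSpace 𝕜 F]
    [NormedAddCommGroup G] [NormedSpace 𝕜 G] {f : 𝕜 → F →L[𝕜] G} {g : 𝕜 → E →L[𝕜] F} {z : 𝕜}
    (hf : AnalyticAt 𝕜 f z) (hg : AnalyticAt 𝕜 g z) : AnalyticAt 𝕜 (fun z => f z ∘L g z) z :=
  ((compL 𝕜 E F G).analyticAt_bilinear (f z, g z)).comp₂ hf hg

variable {A : Type*} [NormedRing A] [NormedAlgebra ℂ A] [CompleteSpace A]

lemma analyticAt_inverse_comp {f : ℂ → A} {z : ℂ} (hf : AnalyticAt ℂ f z) (hz : IsUnit (f z)) :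
    AnalyticAt ℂ (fun w => Ring.inverse (f w)) z := by
  obtain ⟨u, hu⟩ := hz
  exact (hu ▸ analyticAt_inverse u : AnalyticAt ℂ Ring.inverse (f z)).comp hf

lemma analyticAt_inverse_one_sub_smul {a : A} (ha : spectrum ℂ a ⊆ ball 0 1) {z : ℂ}
    (hz : z ∈ closedBall 0 1) : AnalyticAt ℂ (fun z : ℂ => Ring.inverse (1 - z • a)) z :=
  analyticAt_inverse_comp (by fun_prop) (spectrum_subset_ball_iff.1 ha z hz)

end Analytic

section Division

variable {E F : Type*} [NormedAddCommGroup E] [NormedSpace ℂ E] [NormedAddCommGroup F]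
  [NormedSpace ℂ F]

lemma analyticOnNhd_circleAverage_smul_div [CompleteSpace E] {f : ℂ → E} {ρ : ℝ} (hρ : 0 < ρ)
    (hf : ContinuousOn f (sphere 0 ρ)) :
    AnalyticOnNhd ℂ (fun w => Real.circleAverage (fun z => (z / (z - w)) • f z) 0 ρ)
      (ball 0 ρ) := by
  lift ρ to NNReal using hρ.le
  have hcauchy := (hasFPowerSeriesOn_cauchy_integral (hf.circleIntegrable ρ.2) hρ).analyticOnNhd
  rw [eball_coe] at hcauchy
  refine hcauchy.congr isOpen_ball fun w _ => ?_
  simp only [Real.circleAverage_eq_circleIntegral hρ.ne']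
  refine congrArg _ (circleIntegral.integral_congr hρ.le fun z hz => ?_)
  have hz0 : z ≠ 0 := ne_of_mem_sphere hz hρ.ne'
  simp only [sub_zero, smul_smul, div_eq_mul_inv, inv_mul_cancel_left₀ hz0]

lemma comp_inverse_comp_smul_one_sub {α : F →L[ℂ] F} {z : ℂ} (hz : IsUnit (z • 1 - α)) (w : ℂ)
    (T : F →L[ℂ] E) :
    (T ∘L Ring.inverse (z • 1 - α)) ∘L (w • 1 - α) =
      T - (z - w) • (T ∘L Ring.inverse (z • 1 - α)) := by
  have hshift : w • (1 : F →L[ℂ] F) - α = (z • 1 - α) - (z - w) • 1 := by module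
  rw [hshift, comp_sub, comp_inverse_cancel_right hz, comp_smul, one_def, comp_id]

variable [CompleteSpace E] [CompleteSpace F]

lemma exists_eq_add_comp_smul_one_sub_of_diffContOnCl {α : F →L[ℂ] F} {Φ : ℂ → F →L[ℂ] E}
    {ρ : ℝ} (hρ : 0 < ρ) (hα : ∀ z ∈ sphere (0 : ℂ) ρ, IsUnit (z • 1 - α))
    (hΦ : DiffContOnCl ℂ Φ (ball 0 ρ)) :
    ∃ (Γ : F →L[ℂ] E) (H : ℂ → F →L[ℂ] E), AnalyticOnNhd ℂ H (ball 0 ρ) ∧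
      ∀ w ∈ ball (0 : ℂ) ρ, Φ w = Γ + H w ∘L (w • 1 - α) := by
  set K : ℂ → F →L[ℂ] E := fun z => Φ z ∘L Ring.inverse (z • 1 - α)
  have hΦc : ContinuousOn Φ (sphere 0 ρ) := hΦ.continuousOn_ball.mono sphere_subset_closedBall
  have hKc : ContinuousOn K (sphere 0 ρ) := hΦc.clm_comp fun z hz =>
    (analyticAt_inverse_comp (by fun_prop) (hα z hz)).continuousAt.continuousWithinAt
  refine ⟨Real.circleAverage (fun z => z • K z) 0 ρ, _,
    analyticOnNhd_circleAverage_smul_div hρ hKc, fun w hw => ?_⟩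
  have hne : ∀ z ∈ sphere (0 : ℂ) ρ, z - w ≠ 0 := fun z hz =>
    sub_ne_zero.2 fun h => by simp_all
  have hker : ContinuousOn (fun z => z / (z - w)) (sphere 0 ρ) :=
    continuousOn_id.div (by fun_prop) hne
  rw [← sub_eq_iff_eq_add', eq_comm]
  calc Real.circleAverage (fun z => (z / (z - w)) • K z) 0 ρ ∘L (w • 1 - α)
      = Real.circleAverage (fun z => ((z / (z - w)) • K z) ∘L (w • 1 - α)) 0 ρ :=
        ((((compL ℂ F F E).flip (w • 1 - α)).restrictScalars ℝ).circleAverage_comp_comm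
          ((hker.smul hKc).circleIntegrable hρ.le)).symm
    _ = Real.circleAverage (fun z => (z / (z - w)) • Φ z - z • K z) 0 ρ := by
        refine Real.circleAverage_congr_sphere fun z hz => ?_
        rw [abs_of_pos hρ] at hz
        simp only [K, smul_comp, comp_inverse_comp_smul_one_sub (hα z hz), smul_sub, smul_smul,
          div_mul_cancel₀ z (hne z hz)]
    _ = Φ w - Real.circleAverage (fun z => z • K z) 0 ρ := by
        rw [Real.circleAverage_fun_sub (ContinuousOn.circleIntegrable hρ.le (by fun_prop))
          (ContinuousOn.circleIntegrable hρ.le (by fun_prop))]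
        congr 1
        simpa only [sub_zero] using DiffContOnCl.circleAverage_smul_div (R := ρ) (c := 0) (w := w)
          (f := Φ) (by rwa [abs_of_pos hρ]) (by rwa [abs_of_pos hρ])

lemma exists_closedBall_subset_of_isOpen {V : Type*} [NormedAddCommGroup V] [NormedSpace ℝ V]
    [ProperSpace V] {S : Set V} {x : V} {r : ℝ} (hr : 0 ≤ r) (hS : IsOpen S)
    (h : closedBall x r ⊆ S) : ∃ ρ > r, closedBall x ρ ⊆ S := by
  obtain ⟨δ, hδ, hsub⟩ := (isCompact_closedBall x r).exists_cthickening_subset_open hS h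
  rw [cthickening_closedBall hδ.le hr] at hsub
  exact ⟨δ + r, by linarith, hsub⟩

lemma exists_eq_add_comp_smul_one_sub {α : F →L[ℂ] F} (hα : spectrum ℂ α ⊆ ball 0 1)
    {Φ : ℂ → F →L[ℂ] E} (hΦ : AnalyticOnNhd ℂ Φ (closedBall 0 1)) :
    ∃ (Γ : F →L[ℂ] E) (H : ℂ → F →L[ℂ] E), AnalyticOnNhd ℂ H (closedBall 0 1) ∧
      ∀ w ∈ closedBall (0 : ℂ) 1, Φ w = Γ + H w ∘L (w • 1 - α) := by
  obtain ⟨ρ, hρ, hsub⟩ := exists_closedBall_subset_of_isOpen zero_le_one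
    (isOpen_analyticAt ℂ Φ) hΦ
  have hΦρ : DifferentiableOn ℂ Φ (closedBall 0 ρ) := fun z hz =>
    (hsub hz).differentiableAt.differentiableWithinAt
  obtain ⟨Γ, H, hH, hdiv⟩ := exists_eq_add_comp_smul_one_sub_of_diffContOnCl
    (one_pos.trans hρ) (fun z hz => isUnit_smul_one_sub hα (by simp_all [hρ.le]))
    (hΦρ.diffContOnCl_ball subset_rfl)
  have hball := closedBall_subset_ball (x := (0 : ℂ)) hρ
  exact ⟨Γ, H, hH.mono hball, fun w hw => hdiv w (hball hw)⟩

lemma eq_zero_of_add_comp_smul_one_sub_eq_zero {α : F →L[ℂ] F} (hα : spectrum ℂ α ⊆ ball 0 1)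
    {T : F →L[ℂ] E} {H : ℂ → F →L[ℂ] E} (hH : AnalyticOnNhd ℂ H (closedBall 0 1))
    (h : ∀ z : ℂ, ‖z‖ = 1 → T + H z ∘L (z • 1 - α) = 0) : T = 0 := by
  have hcircle : ∀ z : ℂ, ‖z‖ = 1 → -H z = z⁻¹ • (T ∘L Ring.inverse (1 - z⁻¹ • α)) := by
    intro z hz
    have hz0 : z ≠ 0 := norm_ne_zero_iff.1 (hz ▸ one_ne_zero)
    rw [← comp_smul, ← inverse_smul_one_sub hz0, eq_neg_of_add_eq_zero_left (h z hz), neg_comp,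
      ContinuousLinearMap.comp_assoc, ← mul_def (z • 1 - α),
      Ring.mul_inverse_cancel _ (isUnit_smul_one_sub hα hz.ge), one_def, comp_id]
  have hT : AnalyticOnNhd ℂ (fun w : ℂ => T ∘L Ring.inverse (1 - w • α)) (closedBall 0 1) := by
    intro w hw
    have := analyticAt_inverse_one_sub_smul hα hw
    fun_prop
  have hzero := eqOn_zero_of_eq_inv_smul hH.neg hT hcircle
    (show (1 : ℂ) ∈ closedBall 0 1 by simp)
  have h1 := h 1 norm_one
  rwa [neg_eq_zero.1 hzero, zero_comp, add_zero] at h1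

end Division

section SteinEquation

variable {E F : Type*} [NormedAddCommGroup E] [NormedSpace ℂ E] [CompleteSpace E]
  [NormedAddCommGroup F] [NormedSpace ℂ F] [CompleteSpace F]

lemma eq_zero_of_eq_comp_comp {α : E →L[ℂ] E} {β : F →L[ℂ] F} (hα : spectrum ℂ α ⊆ ball 0 1)
    (hβ : spectrum ℂ β ⊆ ball 0 1) {X : F →L[ℂ] E} (hX : X = (α ∘L X) ∘L β) : X = 0 := by
  refine eq_zero_of_add_comp_smul_one_sub_eq_zero hβ
    (H := fun z => Ring.inverse (1 - z • α) ∘L (α ∘L X)) (fun z hz => ?_) fun z hz => ?_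
  · have := analyticAt_inverse_one_sub_smul hα hz
    fun_prop
  · have hu := spectrum_subset_ball_iff.1 hα z (by simp [hz])
    have hsplit : (α ∘L X) ∘L (z • 1 - β) = -((1 - z • α) ∘L X) := by
      ext x
      have hx : X x = α (X (β x)) := DFunLike.congr_fun hX x
      simp [hx]
    rw [ContinuousLinearMap.comp_assoc, hsplit, comp_neg, inverse_comp_cancel_left hu,
      add_neg_cancel]

lemma exists_eq_comp_comp_add {α : E →L[ℂ] E} {β : F →L[ℂ] F} (hα : spectrum ℂ α ⊆ ball 0 1)
    (hβ : spectrum ℂ β ⊆ ball 0 1) (Y : F →L[ℂ] E) :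
    ∃ X : F →L[ℂ] E, X = (α ∘L X) ∘L β + Y := by
  have hres : AnalyticOnNhd ℂ (fun z : ℂ => Ring.inverse (1 - z • α) ∘L Y) (closedBall 0 1) := by
    intro z hz
    have := analyticAt_inverse_one_sub_smul hα hz
    fun_prop
  obtain ⟨X, H, hH, hdiv⟩ := exists_eq_add_comp_smul_one_sub hβ hres
  refine ⟨X, sub_eq_zero.1 (eq_zero_of_add_comp_smul_one_sub_eq_zero hβ
    (H := fun z => (1 - z • α) ∘L H z - α ∘L X) (fun z hz => ?_) fun z hz => ?_)⟩
  · have := hH z hz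
    fun_prop
  · have hz' : z ∈ closedBall (0 : ℂ) 1 := by simp [hz]
    have hY : Y = (1 - z • α) ∘L (X + H z ∘L (z • 1 - β)) := by
      rw [← hdiv z hz', comp_inverse_cancel_left (spectrum_subset_ball_iff.1 hα z hz')]
    ext x
    simp only [hY, add_apply, sub_apply, comp_apply, smul_apply, one_apply_eq_self, map_add,
      map_sub, map_smul, zero_apply]
    module

end SteinEquation

section TransferFunction

variable {𝕜 U V X Y : Type*} [NontriviallyNormedField 𝕜]
  [NormedAddCommGroup U] [NormedSpace 𝕜 U] [NormedAddCommGroup V] [NormedSpace 𝕜 V]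
  [NormedAddCommGroup X] [NormedSpace 𝕜 X] [NormedAddCommGroup Y] [NormedSpace 𝕜 Y]

/-- The transfer function `D + z C (1 - z α)⁻¹ B` of the discrete-time system with state operator
`α`, input operator `B`, output operator `C` and feedthrough `D`. It is meaningful only where
`1 - z α` is invertible: elsewhere `Ring.inverse` makes it `D`. -/
def transferFunction (D : U →L[𝕜] V) (C : X →L[𝕜] V) (α : X →L[𝕜] X) (B : U →L[𝕜] X) (z : 𝕜) :
    U →L[𝕜] V :=
  D + z • ((C ∘L Ring.inverse (1 - z • α)) ∘L B)

lemma transferFunction_zero (D : U →L[𝕜] V) (C : X →L[𝕜] V) (α : X →L[𝕜] X) (B : U →L[𝕜] X) :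
    transferFunction D C α B 0 = D := by
  rw [transferFunction, zero_smul, add_zero]

lemma transferFunction_inv {z : 𝕜} (hz : z ≠ 0) (D : U →L[𝕜] V) (C : X →L[𝕜] V)
    (α : X →L[𝕜] X) (B : U →L[𝕜] X) :
    transferFunction D C α B z⁻¹ = D + (C ∘L Ring.inverse (z • 1 - α)) ∘L B := by
  rw [transferFunction, inverse_smul_one_sub hz, comp_smul, smul_comp]

lemma isUnit_transferFunction_iff {D : U →L[𝕜] U} {C : X →L[𝕜] U} {α : X →L[𝕜] X}
    {B : U →L[𝕜] X} {z : 𝕜} (hD : IsUnit D) (hα : IsUnit (1 - z • α)) :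
    IsUnit (transferFunction D C α B z) ↔
      IsUnit (1 - z • (α - (B ∘L Ring.inverse D) ∘L C)) := by
  rw [transferFunction, ← comp_smul, isUnit_add_comp_inverse_comp_iff hα hD, smul_sub,
    sub_sub_eq_add_sub, smul_comp, smul_comp, sub_add_eq_add_sub]

lemma analyticOnNhd_transferFunction {U V X : Type*} [NormedAddCommGroup U] [NormedSpace ℂ U]
    [NormedAddCommGroup V] [NormedSpace ℂ V] [NormedAddCommGroup X] [NormedSpace ℂ X]
    [CompleteSpace X] {D : U →L[ℂ] V} {C : X →L[ℂ] V} {α : X →L[ℂ] X} {B : U →L[ℂ] X}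
    (hα : spectrum ℂ α ⊆ ball 0 1) :
    AnalyticOnNhd ℂ (transferFunction D C α B) (closedBall 0 1) := by
  intro z hz
  have := analyticAt_inverse_one_sub_smul hα hz
  unfold transferFunction
  fun_prop

lemma inverse_one_sub_smul_apply {α : X →L[𝕜] X} {z : 𝕜} (h : IsUnit (1 - z • α)) (x : X) :
    Ring.inverse (1 - z • α) x = x + z • Ring.inverse (1 - z • α) (α x) := by
  have := DFunLike.congr_fun (Ring.inverse_mul_cancel _ h) x
  simpa [sub_eq_iff_eq_add] using this

lemma transferFunction_comp {D : U →L[𝕜] V} {γ : X →L[𝕜] V} {α : X →L[𝕜] X} {β : Y →L[𝕜] Y}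
    {B : U →L[𝕜] X} {Γ : Y →L[𝕜] U} {Q : Y →L[𝕜] X} (hQ : Q = (α ∘L Q) ∘L β + B ∘L Γ) {z : 𝕜}
    (hz : IsUnit (1 - z • α)) :
    transferFunction D γ α B z ∘L Γ = (D ∘L Γ + (γ ∘L Q) ∘L β) +
      (γ ∘L Ring.inverse (1 - z • α) ∘L Q) ∘L (z • 1 - β) := by
  ext x
  have hBΓ : B (Γ x) = Q x - α (Q (β x)) := eq_sub_of_add_eq' (DFunLike.congr_fun hQ x).symm
  simp only [transferFunction, add_apply, comp_apply, smul_apply, sub_apply, one_apply_eq_self,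
    map_sub, map_smul, hBΓ, inverse_one_sub_smul_apply hz (Q (β x)), map_add, smul_sub]
  abel

lemma eq_comp_add_of_eq_transferFunction_comp {U V X Y : Type*}
    [NormedAddCommGroup U] [NormedSpace ℂ U]
    [NormedAddCommGroup V] [NormedSpace ℂ V] [CompleteSpace V]
    [NormedAddCommGroup X] [NormedSpace ℂ X] [CompleteSpace X]
    [NormedAddCommGroup Y] [NormedSpace ℂ Y] [CompleteSpace Y]
    {D : U →L[ℂ] V} {γ : X →L[ℂ] V} {α : X →L[ℂ] X} {β : Y →L[ℂ] Y} {B : U →L[ℂ] X}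
    {Γ : Y →L[ℂ] U} {Q : Y →L[ℂ] X} {T : Y →L[ℂ] V} {H : ℂ → Y →L[ℂ] U}
    (hα : spectrum ℂ α ⊆ ball 0 1) (hβ : spectrum ℂ β ⊆ ball 0 1)
    (hQ : Q = (α ∘L Q) ∘L β + B ∘L Γ) (hH : AnalyticOnNhd ℂ H (closedBall 0 1))
    (hT : ∀ z : ℂ, ‖z‖ = 1 → T = transferFunction D γ α B z ∘L (Γ + H z ∘L (z • 1 - β))) :
    T = D ∘L Γ + (γ ∘L Q) ∘L β := by
  refine (sub_eq_zero.1 (eq_zero_of_add_comp_smul_one_sub_eq_zero hβ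
    (H := fun z => γ ∘L Ring.inverse (1 - z • α) ∘L Q + transferFunction D γ α B z ∘L H z)
    (fun z hz => ?_) fun z hz => ?_)).symm
  · have := analyticAt_inverse_one_sub_smul hα hz
    have := analyticOnNhd_transferFunction (D := D) (C := γ) (B := B) hα z hz
    have := hH z hz
    fun_prop
  · have hu := spectrum_subset_ball_iff.1 hα z (by simp [hz])
    rw [hT z hz, comp_add, transferFunction_comp hQ hu, add_comp,
      ContinuousLinearMap.comp_assoc _ (H z)]
    abel

end TransferFunction

section PlusFactor

lemma plusFactor_iff {V : ℂ → U →L[ℂ] U} :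
    PlusFactor V ↔
      AnalyticOnNhd ℂ V (closedBall 0 1) ∧ ∀ z ∈ closedBall (0 : ℂ) 1, IsUnit (V z) := by
  refine ⟨fun ⟨S, _, hsub, hV, hu, _⟩ => ⟨hV.mono hsub, fun z hz => hu z (hsub hz)⟩,
    fun ⟨hV, hu⟩ => ?_⟩
  refine ⟨{z | AnalyticAt ℂ V z ∧ IsUnit (V z)}, ?_, fun z hz => ⟨hV z hz, hu z hz⟩,
    fun z hz => hz.1, fun z hz => hz.2, fun z hz => analyticAt_inverse_comp hz.1 hz.2⟩
  refine isOpen_iff_mem_nhds.2 fun z hz => ?_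
  filter_upwards [(isOpen_analyticAt ℂ V).mem_nhds hz.1,
    hz.1.continuousAt.preimage_mem_nhds (Units.isOpen.mem_nhds hz.2)] with w hw hwu using ⟨hw, hwu⟩

lemma PlusFactor.congr {V W : ℂ → U →L[ℂ] U} (hV : PlusFactor V)
    (hVW : Set.EqOn V W (closedBall 0 1)) (hW : AnalyticOnNhd ℂ W (closedBall 0 1)) :
    PlusFactor W :=
  plusFactor_iff.2 ⟨hW, fun z hz => hVW hz ▸ (plusFactor_iff.1 hV).2 z hz⟩

lemma PlusFactor.inverse {V : ℂ → U →L[ℂ] U} (hV : PlusFactor V) :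
    PlusFactor fun z => Ring.inverse (V z) := by
  obtain ⟨hV, hu⟩ := plusFactor_iff.1 hV
  exact plusFactor_iff.2 ⟨fun z hz => analyticAt_inverse_comp (hV z hz) (hu z hz),
    fun z hz => (hu z hz).ringInverse⟩

lemma PlusFactor.mul {V W : ℂ → U →L[ℂ] U} (hV : PlusFactor V) (hW : PlusFactor W) :
    PlusFactor fun z => V z * W z := by
  rw [plusFactor_iff] at *
  exact ⟨hV.1.mul hW.1, fun z hz => (hV.2 z hz).mul (hW.2 z hz)⟩

lemma plusFactor_const {T : U →L[ℂ] U} (hT : IsUnit T) : PlusFactor fun _ => T :=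
  plusFactor_iff.2 ⟨analyticOnNhd_const, fun _ _ => hT⟩

lemma plusFactor_transferFunction_iff {X : Type*} [NormedAddCommGroup X] [NormedSpace ℂ X]
    [CompleteSpace X] {D : U →L[ℂ] U} {C : X →L[ℂ] U} {α : X →L[ℂ] X} {B : U →L[ℂ] X}
    (hD : IsUnit D) (hα : spectrum ℂ α ⊆ ball 0 1) :
    PlusFactor (transferFunction D C α B) ↔
      spectrum ℂ (α - (B ∘L Ring.inverse D) ∘L C) ⊆ ball 0 1 := by
  rw [plusFactor_iff, spectrum_subset_ball_iff, and_iff_right (analyticOnNhd_transferFunction hα)]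
  exact forall₂_congr fun z hz =>
    isUnit_transferFunction_iff hD (spectrum_subset_ball_iff.1 hα z hz)

lemma plusFactor_transferFunction_one_iff {X : Type*} [NormedAddCommGroup X] [NormedSpace ℂ X]
    [CompleteSpace X] {C : X →L[ℂ] U} {α : X →L[ℂ] X} {B : U →L[ℂ] X}
    (hα : spectrum ℂ α ⊆ ball 0 1) :
    PlusFactor (transferFunction 1 C α B) ↔ spectrum ℂ (α - B ∘L C) ⊆ ball 0 1 := by
  rw [plusFactor_transferFunction_iff isUnit_one hα, Ring.inverse_one, one_def, comp_id]

lemma leftCanonicalWH_iff {R : ℂ → U →L[ℂ] U} :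
    LeftCanonicalWH R ↔
      ∃ P M : ℂ → U →L[ℂ] U, PlusFactor P ∧ PlusFactor M ∧ M 0 = 1 ∧
        ∀ z : ℂ, ‖z‖ = 1 → R z = P z * M z⁻¹ := by
  constructor
  · rintro ⟨P, _, hP, ⟨M, hM, hMinus⟩, hR⟩
    have hM0 : IsUnit (M 0) := (plusFactor_iff.1 hM).2 0 (by simp)
    refine ⟨fun z => P z * M 0, fun z => Ring.inverse (M 0) * M z, hP.mul (plusFactor_const hM0),
      (plusFactor_const hM0.ringInverse).mul hM, Ring.inverse_mul_cancel _ hM0, fun z hz => ?_⟩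
    rw [hR z hz, hMinus z hz.ge, mul_assoc, Ring.mul_inverse_cancel_left _ _ hM0]
  · rintro ⟨P, M, hP, hM, -, hR⟩
    exact ⟨P, fun z => M z⁻¹, hP, ⟨M, hM, fun _ _ => rfl⟩, hR⟩

end PlusFactor

section RiccatiData

/-- The Riccati equation in inverse-free form: `D` and `B` stand for `δ - γ₊ Q β₋` and
`β₊ - α₊ Q β₋`, and `Γ` for the feedback operator `D⁻¹ (γ₋ - γ₊ Q α₋)`. The equations say that
the coefficients of `R` are those of the product of the transfer functions
`D + z γ₊ (1 - z α₊)⁻¹ B` and `1 + Γ (z - α₋)⁻¹ β₋`. -/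
structure RiccatiData {𝕜 U Xp Xm : Type*} [NontriviallyNormedField 𝕜]
    [NormedAddCommGroup U] [NormedSpace 𝕜 U] [NormedAddCommGroup Xp] [NormedSpace 𝕜 Xp]
    [NormedAddCommGroup Xm] [NormedSpace 𝕜 Xm]
    (δ : U →L[𝕜] U) (γp : Xp →L[𝕜] U) (αp : Xp →L[𝕜] Xp) (βp : U →L[𝕜] Xp)
    (γm : Xm →L[𝕜] U) (αm : Xm →L[𝕜] Xm) (βm : U →L[𝕜] Xm)
    (Q : Xm →L[𝕜] Xp) (D : U →L[𝕜] U) (B : U →L[𝕜] Xp) (Γ : Xm →L[𝕜] U) : Prop where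
  isUnit : IsUnit D
  feedthrough_eq : δ = D + (γp ∘L Q) ∘L βm
  input_eq : βp = B + (αp ∘L Q) ∘L βm
  output_eq : γm = D ∘L Γ + (γp ∘L Q) ∘L αm
  eq_add : Q = (αp ∘L Q) ∘L αm + B ∘L Γ

namespace RiccatiData

variable {𝕜 U Xp Xm : Type*} [NontriviallyNormedField 𝕜]
  [NormedAddCommGroup U] [NormedSpace 𝕜 U] [NormedAddCommGroup Xp] [NormedSpace 𝕜 Xp]
  [NormedAddCommGroup Xm] [NormedSpace 𝕜 Xm]
  {δ : U →L[𝕜] U} {γp : Xp →L[𝕜] U} {αp : Xp →L[𝕜] Xp} {βp : U →L[𝕜] Xp}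
  {γm : Xm →L[𝕜] U} {αm : Xm →L[𝕜] Xm} {βm : U →L[𝕜] Xm}
  {Q Q₁ Q₂ : Xm →L[𝕜] Xp} {D D₁ D₂ : U →L[𝕜] U} {B B₁ B₂ : U →L[𝕜] Xp} {Γ Γ₁ Γ₂ : Xm →L[𝕜] U}

lemma inverse_comp_eq (h : RiccatiData δ γp αp βp γm αm βm Q D B Γ) :
    Ring.inverse (δ - (γp ∘L Q) ∘L βm) ∘L (γm - (γp ∘L Q) ∘L αm) = Γ := by
  rw [h.feedthrough_eq, h.output_eq, add_sub_cancel_right, add_sub_cancel_right,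
    inverse_comp_cancel_left h.isUnit]

lemma sub_eq_comp_sub_comp (h₁ : RiccatiData δ γp αp βp γm αm βm Q₁ D₁ B₁ Γ₁)
    (h₂ : RiccatiData δ γp αp βp γm αm βm Q₂ D₂ B₂ Γ₂) :
    Q₁ - Q₂ = ((αp - (B₁ ∘L Ring.inverse D₁) ∘L γp) ∘L (Q₁ - Q₂)) ∘L (αm - βm ∘L Γ₂) := by
  have hγ : γp ∘L (Q₁ - Q₂) ∘L (αm - βm ∘L Γ₂) = D₁ ∘L (Γ₂ - Γ₁) := by
    ext x
    have hδ : D₁ (Γ₂ x) + γp (Q₁ (βm (Γ₂ x))) = D₂ (Γ₂ x) + γp (Q₂ (βm (Γ₂ x))) :=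
      DFunLike.congr_fun (h₁.feedthrough_eq.symm.trans h₂.feedthrough_eq) (Γ₂ x)
    have hγ : D₁ (Γ₁ x) + γp (Q₁ (αm x)) = D₂ (Γ₂ x) + γp (Q₂ (αm x)) :=
      DFunLike.congr_fun (h₁.output_eq.symm.trans h₂.output_eq) x
    simp only [comp_apply, sub_apply, map_sub]
    linear_combination (norm := module) hγ - hδ
  have hα : αp ∘L (Q₁ - Q₂) ∘L (αm - βm ∘L Γ₂) = (Q₁ - Q₂) + B₁ ∘L (Γ₂ - Γ₁) := by
    ext x
    have hβ : B₁ (Γ₂ x) + αp (Q₁ (βm (Γ₂ x))) = B₂ (Γ₂ x) + αp (Q₂ (βm (Γ₂ x))) :=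
      DFunLike.congr_fun (h₁.input_eq.symm.trans h₂.input_eq) (Γ₂ x)
    have hQ₁ : Q₁ x = αp (Q₁ (αm x)) + B₁ (Γ₁ x) := DFunLike.congr_fun h₁.eq_add x
    have hQ₂ : Q₂ x = αp (Q₂ (αm x)) + B₂ (Γ₂ x) := DFunLike.congr_fun h₂.eq_add x
    simp only [comp_apply, sub_apply, add_apply, map_sub]
    linear_combination (norm := module) hQ₂ - hQ₁ - hβ
  rw [sub_comp, sub_comp]
  simp only [ContinuousLinearMap.comp_assoc, hα, hγ, inverse_comp_cancel_left h₁.isUnit,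
    add_sub_cancel_right]

end RiccatiData

omit [CompleteSpace U] [CompleteSpace Xp] [CompleteSpace Xm]

variable {δ : U →L[ℂ] U} {γp : Xp →L[ℂ] U} {αp : Xp →L[ℂ] Xp} {βp : U →L[ℂ] Xp}
  {γm : Xm →L[ℂ] U} {αm : Xm →L[ℂ] Xm} {βm : U →L[ℂ] Xm}
  {Q : Xm →L[ℂ] Xp} {D : U →L[ℂ] U} {B : U →L[ℂ] Xp} {Γ : Xm →L[ℂ] U} {z : ℂ}

lemma transferFunction_mul_transferFunction_inv (hQ : Q = (αp ∘L Q) ∘L αm + B ∘L Γ) (hz : z ≠ 0)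
    (hp : IsUnit (1 - z • αp)) (hm : IsUnit (z • 1 - αm)) :
    transferFunction D γp αp B z * transferFunction 1 Γ αm βm z⁻¹ =
      Rfun (D + (γp ∘L Q) ∘L βm) γp αp (B + (αp ∘L Q) ∘L βm) (D ∘L Γ + (γp ∘L Q) ∘L αm)
        αm βm z := by
  have hcancel (x : Xm) : (z • 1 - αm) (Ring.inverse (z • 1 - αm) x) = x :=
    DFunLike.congr_fun (Ring.mul_inverse_cancel _ hm) x
  rw [transferFunction_inv hz, mul_add, mul_one, mul_def, ContinuousLinearMap.comp_assoc,
    ← ContinuousLinearMap.comp_assoc, transferFunction_comp hQ hp]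
  ext u
  simp only [transferFunction, Rfun, add_apply, comp_apply, smul_apply, map_add, smul_add, hcancel,
    inverse_one_sub_smul_apply hp (Q (βm u)), map_smul]
  abel

lemma SolvesLeftRiccati.riccatiData (h : SolvesLeftRiccati δ γp αp βp γm αm βm Q) :
    RiccatiData δ γp αp βp γm αm βm Q (δ - (γp ∘L Q) ∘L βm) (βp - (αp ∘L Q) ∘L βm)
      (Ring.inverse (δ - (γp ∘L Q) ∘L βm) ∘L (γm - (γp ∘L Q) ∘L αm)) where
  isUnit := h.1
  feedthrough_eq := (sub_add_cancel _ _).symm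
  input_eq := (sub_add_cancel _ _).symm
  output_eq := by rw [comp_inverse_cancel_left h.1, sub_add_cancel]
  eq_add := h.2

namespace RiccatiData

lemma solvesLeftRiccati (h : RiccatiData δ γp αp βp γm αm βm Q D B Γ) :
    SolvesLeftRiccati δ γp αp βp γm αm βm Q := by
  refine ⟨by simpa [h.feedthrough_eq] using h.isUnit, ?_⟩
  rw [ContinuousLinearMap.comp_assoc _ _ (γm - _), h.inverse_comp_eq, h.input_eq,
    add_sub_cancel_right]
  exact h.eq_add

lemma stabilizingLeftRiccati_iff (h : RiccatiData δ γp αp βp γm αm βm Q D B Γ) :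
    StabilizingLeftRiccati δ γp αp βp γm αm βm Q ↔
      spectrum ℂ (αm - βm ∘L Γ) ⊆ ball 0 1 ∧
        spectrum ℂ (αp - (B ∘L Ring.inverse D) ∘L γp) ⊆ ball 0 1 := by
  rw [StabilizingLeftRiccati, ContinuousLinearMap.comp_assoc βm, h.inverse_comp_eq, h.input_eq,
    h.feedthrough_eq, add_sub_cancel_right, add_sub_cancel_right]

lemma rfun_eq_mul (h : RiccatiData δ γp αp βp γm αm βm Q D B Γ) (hz : z ≠ 0)
    (hp : IsUnit (1 - z • αp)) (hm : IsUnit (z • 1 - αm)) :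
    Rfun δ γp αp βp γm αm βm z =
      transferFunction D γp αp B z * transferFunction 1 Γ αm βm z⁻¹ := by
  rw [transferFunction_mul_transferFunction_inv h.eq_add hz hp hm, ← h.feedthrough_eq,
    ← h.input_eq, ← h.output_eq]

end RiccatiData

end RiccatiData

section Factorization

variable {δ : U →L[ℂ] U} {γp : Xp →L[ℂ] U} {αp : Xp →L[ℂ] Xp} {βp : U →L[ℂ] Xp}
  {γm : Xm →L[ℂ] U} {αm : Xm →L[ℂ] Xm} {βm : U →L[ℂ] Xm}
  {Q Q₁ Q₂ : Xm →L[ℂ] Xp} {D : U →L[ℂ] U} {B : U →L[ℂ] Xp} {Γ : Xm →L[ℂ] U}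
  {P M : ℂ → U →L[ℂ] U}

namespace RiccatiData

lemma stabilizingLeftRiccati_iff_plusFactor (h : RiccatiData δ γp αp βp γm αm βm Q D B Γ)
    (hαp : spectrum ℂ αp ⊆ ball 0 1) (hαm : spectrum ℂ αm ⊆ ball 0 1) :
    StabilizingLeftRiccati δ γp αp βp γm αm βm Q ↔
      PlusFactor (transferFunction 1 Γ αm βm) ∧ PlusFactor (transferFunction D γp αp B) := by
  rw [h.stabilizingLeftRiccati_iff, plusFactor_transferFunction_one_iff hαm,
    plusFactor_transferFunction_iff h.isUnit hαp]

lemma leftCanonicalWH (h : RiccatiData δ γp αp βp γm αm βm Q D B Γ)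
    (hαp : spectrum ℂ αp ⊆ ball 0 1) (hαm : spectrum ℂ αm ⊆ ball 0 1)
    (hs : StabilizingLeftRiccati δ γp αp βp γm αm βm Q) :
    LeftCanonicalWH (Rfun δ γp αp βp γm αm βm) := by
  obtain ⟨hM, hP⟩ := (h.stabilizingLeftRiccati_iff_plusFactor hαp hαm).1 hs
  refine leftCanonicalWH_iff.2 ⟨_, _, hP, hM, transferFunction_zero _ _ _ _, fun z hz => ?_⟩
  exact h.rfun_eq_mul (norm_ne_zero_iff.1 (hz ▸ one_ne_zero))
    (spectrum_subset_ball_iff.1 hαp z (by simp [hz])) (isUnit_smul_one_sub hαm hz.ge)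

end RiccatiData

omit [CompleteSpace U] in
lemma StabilizingLeftRiccati.eq_of_solvesLeftRiccati
    (hs₁ : StabilizingLeftRiccati δ γp αp βp γm αm βm Q₁)
    (hs₂ : StabilizingLeftRiccati δ γp αp βp γm αm βm Q₂)
    (h₁ : SolvesLeftRiccati δ γp αp βp γm αm βm Q₁)
    (h₂ : SolvesLeftRiccati δ γp αp βp γm αm βm Q₂) : Q₁ = Q₂ := by
  have hαp₁ := (h₁.riccatiData.stabilizingLeftRiccati_iff.1 hs₁).2
  have hαm₂ := (h₂.riccatiData.stabilizingLeftRiccati_iff.1 hs₂).1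
  exact sub_eq_zero.1 (eq_zero_of_eq_comp_comp hαp₁ hαm₂
    (h₁.riccatiData.sub_eq_comp_sub_comp h₂.riccatiData))

omit [CompleteSpace U] [CompleteSpace Xp] [CompleteSpace Xm] in
lemma mul_rfun_eq {S : U →L[ℂ] U} {H : Xm →L[ℂ] U} {z : ℂ} (hz : z ≠ 0)
    (hm : IsUnit (z • 1 - αm)) (hdiv : S ∘L γm = Γ + H ∘L (z • 1 - αm)) :
    S * Rfun δ γp αp βp γm αm βm z =
      (S * transferFunction δ γp αp βp z + H ∘L βm - 1) + transferFunction 1 Γ αm βm z⁻¹ := by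
  have hγ : S * ((γm ∘L Ring.inverse (z • 1 - αm)) ∘L βm) =
      (Γ ∘L Ring.inverse (z • 1 - αm)) ∘L βm + H ∘L βm := by
    rw [mul_def, ← ContinuousLinearMap.comp_assoc, ← ContinuousLinearMap.comp_assoc, hdiv,
      add_comp, add_comp, ContinuousLinearMap.comp_assoc H, ContinuousLinearMap.comp_assoc H,
      ContinuousLinearMap.comp_assoc (z • 1 - αm), comp_inverse_cancel_left hm]
  have hR : Rfun δ γp αp βp γm αm βm z =
      transferFunction δ γp αp βp z + (γm ∘L Ring.inverse (z • 1 - αm)) ∘L βm := rfl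
  rw [hR, mul_add, hγ, transferFunction_inv hz]
  abel

lemma exists_minusFactor_eqOn_transferFunction (hαp : spectrum ℂ αp ⊆ ball 0 1)
    (hαm : spectrum ℂ αm ⊆ ball 0 1) (hP : PlusFactor P)
    (hM : AnalyticOnNhd ℂ M (closedBall 0 1)) (hM0 : M 0 = 1)
    (hR : ∀ z : ℂ, ‖z‖ = 1 → Rfun δ γp αp βp γm αm βm z = P z * M z⁻¹) :
    ∃ (Γ : Xm →L[ℂ] U) (H : ℂ → Xm →L[ℂ] U), AnalyticOnNhd ℂ H (closedBall 0 1) ∧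
      (∀ z ∈ closedBall (0 : ℂ) 1, γm = P z ∘L (Γ + H z ∘L (z • 1 - αm))) ∧
      Set.EqOn M (transferFunction 1 Γ αm βm) (closedBall 0 1) := by
  have hPu := (plusFactor_iff.1 hP).2
  have hPi := (plusFactor_iff.1 hP.inverse).1
  obtain ⟨Γ, H, hH, hdiv⟩ := exists_eq_add_comp_smul_one_sub hαm
    (Φ := fun z => Ring.inverse (P z) ∘L γm) fun z hz => by
      have := hPi z hz
      fun_prop
  refine ⟨Γ, H, hH, fun z hz => ?_, ?_⟩
  · rw [← hdiv z hz, comp_inverse_cancel_left (hPu z hz)]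
  set f : ℂ → U →L[ℂ] U := fun z =>
    Ring.inverse (P z) * transferFunction δ γp αp βp z + H z ∘L βm - 1
  set g : ℂ → U →L[ℂ] U := M - transferFunction 1 Γ αm βm
  have hf : AnalyticOnNhd ℂ f (closedBall 0 1) := by
    intro z hz
    have := hPi z hz
    have := hH z hz
    have := analyticOnNhd_transferFunction (D := δ) (C := γp) (B := βp) hαp z hz
    fun_prop
  have hg : AnalyticOnNhd ℂ g (closedBall 0 1) := hM.sub (analyticOnNhd_transferFunction hαm)
  have hgf : ∀ w : ℂ, ‖w‖ = 1 → g w = f w⁻¹ := by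
    intro w hw
    have hz : ‖w⁻¹‖ = 1 := by rw [norm_inv, hw, inv_one]
    have hz0 : w⁻¹ ≠ 0 := norm_ne_zero_iff.1 (hz ▸ one_ne_zero)
    have hz' : w⁻¹ ∈ closedBall (0 : ℂ) 1 := by simp [hw]
    have hquot := mul_rfun_eq (δ := δ) (γp := γp) (αp := αp) (βp := βp) (βm := βm) hz0
      (isUnit_smul_one_sub hαm hz.ge) (hdiv w⁻¹ hz')
    rw [hR _ hz, Ring.inverse_mul_cancel_left _ _ (hPu _ hz'), inv_inv] at hquot
    exact sub_eq_iff_eq_add.2 hquot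
  have hconst := eqOn_const_of_eq_comp_inv (hg.differentiableOn.diffContOnCl_ball subset_rfl)
    (hf.differentiableOn.diffContOnCl_ball subset_rfl) hgf
  have hg0 : g 0 = 0 := by simp only [g, Pi.sub_apply, hM0, transferFunction_zero, sub_self]
  have hf0 : f 0 = 0 := (hconst (by simp : (0 : ℂ) ∈ closedBall 0 1)).symm.trans hg0
  exact fun w hw => sub_eq_zero.1 ((hconst hw).trans hf0)

lemma plusFactor_eqOn_transferFunction (hαp : spectrum ℂ αp ⊆ ball 0 1)
    (hαm : spectrum ℂ αm ⊆ ball 0 1) (hP : AnalyticOnNhd ℂ P (closedBall 0 1))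
    (hM : PlusFactor (transferFunction 1 Γ αm βm)) (hQ : Q = (αp ∘L Q) ∘L αm + B ∘L Γ)
    (hR : ∀ z : ℂ, ‖z‖ = 1 →
      Rfun (D + (γp ∘L Q) ∘L βm) γp αp (B + (αp ∘L Q) ∘L βm) γm αm βm z =
        P z * transferFunction 1 Γ αm βm z⁻¹) :
    Set.EqOn P (transferFunction D γp αp B) (closedBall 0 1) := by
  set T := γm - (D ∘L Γ + (γp ∘L Q) ∘L αm)
  set M := transferFunction 1 Γ αm βm
  have hMi := (plusFactor_iff.1 hM.inverse).1
  have hg : AnalyticOnNhd ℂ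
      (fun w => ((T ∘L Ring.inverse (1 - w • αm)) ∘L βm) * Ring.inverse (M w))
      (closedBall 0 1) := by
    intro w hw
    have := hMi w hw
    have := analyticAt_inverse_one_sub_smul hαm hw
    fun_prop
  have hf : AnalyticOnNhd ℂ (P - transferFunction D γp αp B) (closedBall 0 1) :=
    hP.sub (analyticOnNhd_transferFunction hαp)
  refine fun z hz => sub_eq_zero.1 (eqOn_zero_of_eq_inv_smul hf hg (fun z hz => ?_) hz)
  have hz0 : z ≠ 0 := norm_ne_zero_iff.1 (hz ▸ one_ne_zero)
  have hMu : IsUnit (M z⁻¹) := (plusFactor_iff.1 hM).2 _ (by simp [hz])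
  have hdiff : (P z - transferFunction D γp αp B z) * M z⁻¹ =
      z⁻¹ • ((T ∘L Ring.inverse (1 - z⁻¹ • αm)) ∘L βm) := by
    rw [sub_mul, ← hR z hz, transferFunction_mul_transferFunction_inv hQ hz0
      (spectrum_subset_ball_iff.1 hαp z (by simp [hz])) (isUnit_smul_one_sub hαm hz.ge),
      ← smul_comp, ← comp_smul, ← inverse_smul_one_sub hz0, Rfun, Rfun, add_sub_add_left_eq_sub,
      ← sub_comp, ← sub_comp]
  rw [Pi.sub_apply, ← smul_mul_assoc, ← hdiff, Ring.mul_inverse_cancel_right _ _ hMu]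

lemma exists_riccatiData_of_leftCanonicalWH (hαp : spectrum ℂ αp ⊆ ball 0 1)
    (hαm : spectrum ℂ αm ⊆ ball 0 1) (h : LeftCanonicalWH (Rfun δ γp αp βp γm αm βm)) :
    ∃ Q D B Γ, RiccatiData δ γp αp βp γm αm βm Q D B Γ ∧
      PlusFactor (transferFunction 1 Γ αm βm) ∧ PlusFactor (transferFunction D γp αp B) := by
  obtain ⟨P, M, hP, hM, hM0, hR⟩ := leftCanonicalWH_iff.1 h
  obtain ⟨Γ, H, hH, hγm, hMtf⟩ :=
    exists_minusFactor_eqOn_transferFunction hαp hαm hP (plusFactor_iff.1 hM).1 hM0 hR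
  have hM' := hM.congr hMtf (analyticOnNhd_transferFunction hαm)
  obtain ⟨Q, hStein⟩ := exists_eq_comp_comp_add hαp
    ((plusFactor_transferFunction_one_iff hαm).1 hM') (βp ∘L Γ)
  set D := δ - (γp ∘L Q) ∘L βm
  set B := βp - (αp ∘L Q) ∘L βm with hB
  have hδ : δ = D + (γp ∘L Q) ∘L βm := (sub_add_cancel _ _).symm
  have hβ : βp = B + (αp ∘L Q) ∘L βm := (sub_add_cancel _ _).symm
  have hQ : Q = (αp ∘L Q) ∘L αm + B ∘L Γ := by
    rw [hB, sub_comp, ContinuousLinearMap.comp_assoc _ βm, add_sub_left_comm, add_comm, ← comp_sub]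
    exact hStein
  have hPtf : Set.EqOn P (transferFunction D γp αp B) (closedBall 0 1) := by
    refine plusFactor_eqOn_transferFunction (γm := γm) hαp hαm (plusFactor_iff.1 hP).1 hM' hQ
      fun z hz => ?_
    rw [← hδ, ← hβ, hR z hz, hMtf (by simp [hz])]
  have hP' := hP.congr hPtf (analyticOnNhd_transferFunction hαp)
  have hD : IsUnit D := by
    simpa only [transferFunction_zero] using (plusFactor_iff.1 hP').2 0 (by simp)
  have hγ : γm = D ∘L Γ + (γp ∘L Q) ∘L αm :=
    eq_comp_add_of_eq_transferFunction_comp hαp hαm hQ hH fun z hz => by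
      have hz' : z ∈ closedBall (0 : ℂ) 1 := by simp [hz]
      rw [← hPtf hz', ← hγm z hz']
  exact ⟨Q, D, B, Γ, ⟨hD, hδ, hβ, hγ, hQ⟩, hM', hP'⟩

end Factorization

theorem leftCanonicalWH_iff_exists_stabilizing_solution_general
    (δ : U →L[ℂ] U) (γp : Xp →L[ℂ] U) (αp : Xp →L[ℂ] Xp) (βp : U →L[ℂ] Xp)
    (γm : Xm →L[ℂ] U) (αm : Xm →L[ℂ] Xm) (βm : U →L[ℂ] Xm)
    (hαp : spectrum ℂ αp ⊆ ball (0 : ℂ) 1) (hαm : spectrum ℂ αm ⊆ ball (0 : ℂ) 1) :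
    (LeftCanonicalWH (Rfun δ γp αp βp γm αm βm) ↔
      ∃ Qt : Xm →L[ℂ] Xp, SolvesLeftRiccati δ γp αp βp γm αm βm Qt ∧
        StabilizingLeftRiccati δ γp αp βp γm αm βm Qt) ∧
    (∀ Qt₁ Qt₂ : Xm →L[ℂ] Xp,
      SolvesLeftRiccati δ γp αp βp γm αm βm Qt₁ →
      StabilizingLeftRiccati δ γp αp βp γm αm βm Qt₁ →
      SolvesLeftRiccati δ γp αp βp γm αm βm Qt₂ →
      StabilizingLeftRiccati δ γp αp βp γm αm βm Qt₂ → Qt₁ = Qt₂) := by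
  refine ⟨⟨fun hWH => ?_, fun ⟨Qt, hsol, hstab⟩ => ?_⟩, fun Qt₁ Qt₂ h₁ hs₁ h₂ hs₂ => ?_⟩
  · obtain ⟨Qt, D, B, Γ, hdata, hfactors⟩ := exists_riccatiData_of_leftCanonicalWH hαp hαm hWH
    exact ⟨Qt, hdata.solvesLeftRiccati,
      (hdata.stabilizingLeftRiccati_iff_plusFactor hαp hαm).2 hfactors⟩
  · exact hsol.riccatiData.leftCanonicalWH hαp hαm hstab
  · exact hs₁.eq_of_solvesLeftRiccati hs₂ h₁ h₂

/-- `R` admits a left canonical Wiener–Hopf factorization if and only if the left Riccati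
equation has a stabilizing solution; moreover there is at most one stabilizing solution. -/
theorem leftCanonicalWH_iff_exists_stabilizing_solution
    (δ : U →L[ℂ] U) (γp : Xp →L[ℂ] U) (αp : Xp →L[ℂ] Xp) (βp : U →L[ℂ] Xp)
    (γm : Xm →L[ℂ] U) (αm : Xm →L[ℂ] Xm) (βm : U →L[ℂ] Xm)
    (hαp : spectrum ℂ αp ⊆ ball (0 : ℂ) 1) (hαm : spectrum ℂ αm ⊆ ball (0 : ℂ) 1)
    (r₁ r₂ : ℝ) (hr₁ : r₁ < 1) (hr₂ : 1 < r₂)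
    (hRinv : ∀ z : ℂ, r₁ < ‖z‖ → ‖z‖ < r₂ → IsUnit (Rfun δ γp αp βp γm αm βm z)) :
    (LeftCanonicalWH (Rfun δ γp αp βp γm αm βm) ↔
      ∃ Qt : Xm →L[ℂ] Xp, SolvesLeftRiccati δ γp αp βp γm αm βm Qt ∧
        StabilizingLeftRiccati δ γp αp βp γm αm βm Qt) ∧
    (∀ Qt₁ Qt₂ : Xm →L[ℂ] Xp,
      SolvesLeftRiccati δ γp αp βp γm αm βm Qt₁ →
      StabilizingLeftRiccati δ γp αp βp γm αm βm Qt₁ →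
      SolvesLeftRiccati δ γp αp βp γm αm βm Qt₂ →
      StabilizingLeftRiccati δ γp αp βp γm αm βm Qt₂ → Qt₁ = Qt₂) :=
  leftCanonicalWH_iff_exists_stabilizing_solution_general δ γp αp βp γm αm βm hαp hαm
end
end

section
/- Assume α₋ is invertible. If R(0) = δ − γ₋α₋⁻¹β₋ is invertible, then for every Q ∈ B(X₊, X₋) such that δ − γ₋Qβ₊ is invertible, the operator α₋° := α₋ − (β₋ − α₋Qβ₊)(δ − γ₋Qβ₊)⁻¹γ₋ is invertible, with inverse (α₋°)⁻¹ = α₋⁻¹ + α₋⁻¹(β₋ − α₋Qβ₊)(δ − γ₋α₋⁻¹β₋)⁻¹γ₋α₋⁻¹. -/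
/-!
Since `α₋° = a - b d⁻¹ c` with `a = α₋`, `b = β₋ - α₋Qβ₊`, `c = γ₋`, `d = δ - γ₋Qβ₊`, everything
follows from the Woodbury identity, which expresses `(a - b d⁻¹ c)⁻¹` through the inverse of the
Schur complement `d - c a⁻¹ b`. The point is that this Schur complement does not depend on `Q`:
the two occurrences of `γ₋Qβ₊` cancel, leaving `R(0)`.

With `x = a⁻¹ b` and `y = d⁻¹ c`, the Woodbury identity reduces to the fact that `1 - x y` is
invertible exactly when `1 - y x` is, with `(1 - x y)⁻¹ = 1 + x (1 - y x)⁻¹ y`, because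
`a - b d⁻¹ c = a (1 - x y)` and `d - c a⁻¹ b = d (1 - y x)`.
-/

open Metric ContinuousLinearMap

noncomputable section

variable {U Xp Xm : Type*}
  [NormedAddCommGroup U] [InnerProductSpace ℂ U] [CompleteSpace U]
  [NormedAddCommGroup Xp] [InnerProductSpace ℂ Xp] [CompleteSpace Xp]
  [NormedAddCommGroup Xm] [InnerProductSpace ℂ Xm] [CompleteSpace Xm]

section Woodbury

variable {R E F : Type*} [Ring R]
  [AddCommGroup E] [TopologicalSpace E] [IsTopologicalAddGroup E] [Module R E]
  [AddCommGroup F] [TopologicalSpace F] [Module R F]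

theorem mul_one_sub_ringInverse_comp {a : E →L[R] E} (ha : IsUnit a) (b : F →L[R] E)
    (e : F →L[R] F) (c : E →L[R] F) :
    a * (1 - (Ring.inverse a ∘L b) ∘L (e ∘L c)) = a - (b ∘L e) ∘L c := by
  have ha' (v : E) : a (Ring.inverse a v) = v :=
    DFunLike.congr_fun (Ring.mul_inverse_cancel a ha) v
  ext v
  simp [ha']

variable [IsTopologicalAddGroup F]

theorem one_sub_comp_mul_one_add_comp_comp {x : F →L[R] E} {y : E →L[R] F} {s : F →L[R] F}
    (hs : (1 - y ∘L x) * s = 1) : (1 - x ∘L y) * (1 + x ∘L s ∘L y) = 1 := by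
  calc (1 - x ∘L y) * (1 + x ∘L s ∘L y)
      = 1 + x ∘L ((1 - y ∘L x) * s - 1) ∘L y := by
        ext v
        simp only [mul_apply_eq_comp, add_apply, sub_apply, one_apply_eq_self, comp_apply, map_add,
          map_sub]
        abel
    _ = 1 := by simp [hs]

theorem one_add_comp_comp_mul_one_sub_comp {x : F →L[R] E} {y : E →L[R] F} {s : F →L[R] F}
    (hs : s * (1 - y ∘L x) = 1) : (1 + x ∘L s ∘L y) * (1 - x ∘L y) = 1 := by
  calc (1 + x ∘L s ∘L y) * (1 - x ∘L y)
      = 1 + x ∘L (s * (1 - y ∘L x) - 1) ∘L y := by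
        ext v
        simp only [mul_apply_eq_comp, add_apply, sub_apply, one_apply_eq_self, comp_apply, map_sub]
        abel
    _ = 1 := by simp [hs]

theorem isUnit_one_sub_comp_swap {x : F →L[R] E} {y : E →L[R] F} (h : IsUnit (1 - y ∘L x)) :
    IsUnit (1 - x ∘L y) :=
  isUnit_iff_exists.mpr ⟨_,
    one_sub_comp_mul_one_add_comp_comp (Ring.mul_inverse_cancel _ h),
    one_add_comp_comp_mul_one_sub_comp (Ring.inverse_mul_cancel _ h)⟩

theorem isUnit_one_sub_comp_comm (x : F →L[R] E) (y : E →L[R] F) :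
    IsUnit (1 - x ∘L y) ↔ IsUnit (1 - y ∘L x) :=
  ⟨isUnit_one_sub_comp_swap, isUnit_one_sub_comp_swap⟩

theorem ringInverse_one_sub_comp {x : F →L[R] E} {y : E →L[R] F} (h : IsUnit (1 - y ∘L x)) :
    Ring.inverse (1 - x ∘L y) = 1 + x ∘L Ring.inverse (1 - y ∘L x) ∘L y :=
  left_inv_eq_right_inv (Ring.inverse_mul_cancel _ (isUnit_one_sub_comp_swap h))
    (one_sub_comp_mul_one_add_comp_comp (Ring.mul_inverse_cancel _ h))

theorem isUnit_sub_comp_ringInverse_comp_iff {a : E →L[R] E} {d : F →L[R] F} (ha : IsUnit a)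
    (hd : IsUnit d) (b : F →L[R] E) (c : E →L[R] F) :
    IsUnit (a - (b ∘L Ring.inverse d) ∘L c) ↔ IsUnit (d - (c ∘L Ring.inverse a) ∘L b) := by
  rw [← mul_one_sub_ringInverse_comp ha, ← mul_one_sub_ringInverse_comp hd,
    ha.mul_left_iff, hd.mul_left_iff, isUnit_one_sub_comp_comm]

theorem ringInverse_sub_comp_ringInverse_comp {a : E →L[R] E} {d : F →L[R] F} {b : F →L[R] E}
    {c : E →L[R] F} (ha : IsUnit a) (hd : IsUnit d)
    (hs : IsUnit (d - (c ∘L Ring.inverse a) ∘L b)) :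
    Ring.inverse (a - (b ∘L Ring.inverse d) ∘L c) =
      Ring.inverse a +
        ((Ring.inverse a ∘L b) ∘L Ring.inverse (d - (c ∘L Ring.inverse a) ∘L b)) ∘L
          (c ∘L Ring.inverse a) := by
  set x := Ring.inverse a ∘L b
  set y := Ring.inverse d ∘L c
  have ha_eq : a - (b ∘L Ring.inverse d) ∘L c = a * (1 - x ∘L y) :=
    (mul_one_sub_ringInverse_comp ha b _ c).symm
  have hd_eq : d - (c ∘L Ring.inverse a) ∘L b = d * (1 - y ∘L x) :=
    (mul_one_sub_ringInverse_comp hd c _ b).symm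
  have hyx : IsUnit (1 - y ∘L x) := hd.mul_left_iff.mp (hd_eq ▸ hs)
  calc Ring.inverse (a - (b ∘L Ring.inverse d) ∘L c)
      = Ring.inverse (1 - x ∘L y) * Ring.inverse a := by rw [ha_eq, Ring.inverse_mul (.inl ha)]
    _ = (1 + x ∘L Ring.inverse (1 - y ∘L x) ∘L y) * Ring.inverse a := by
      rw [ringInverse_one_sub_comp hyx]
    _ = Ring.inverse a +
          (x ∘L (Ring.inverse (1 - y ∘L x) * Ring.inverse d)) ∘L (c ∘L Ring.inverse a) := by
      simp only [y, add_mul, one_mul, mul_def, comp_assoc]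
    _ = Ring.inverse a +
          (x ∘L Ring.inverse (d - (c ∘L Ring.inverse a) ∘L b)) ∘L (c ∘L Ring.inverse a) := by
      rw [hd_eq, Ring.inverse_mul (.inl hd)]

variable {G : Type*} [AddCommMonoid G] [TopologicalSpace G] [Module R G]

theorem schurComplement_sub_comp_eq {a : E →L[R] E} (ha : IsUnit a) (b : F →L[R] E)
    (c : E →L[R] F) (d : F →L[R] F) (q : G →L[R] E) (p : F →L[R] G) :
    d - (c ∘L q) ∘L p - (c ∘L Ring.inverse a) ∘L (b - (a ∘L q) ∘L p) =
      d - (c ∘L Ring.inverse a) ∘L b := by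
  have ha' (v : E) : Ring.inverse a (a v) = v :=
    DFunLike.congr_fun (Ring.inverse_mul_cancel a ha) v
  ext u
  simp [ha']

theorem alphaMcirc_invertible_of_R0_invertible_general
    {δ : F →L[R] F} {βp : F →L[R] G} {γm : E →L[R] F} {αm : E →L[R] E} {βm : F →L[R] E}
    (hαm : IsUnit αm) {Q : G →L[R] E} (hQ : IsUnit (δ - (γm ∘L Q) ∘L βp)) :
    (IsUnit (αm - ((βm - (αm ∘L Q) ∘L βp) ∘L Ring.inverse (δ - (γm ∘L Q) ∘L βp)) ∘L γm) ↔
      IsUnit (δ - (γm ∘L Ring.inverse αm) ∘L βm)) ∧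
    (IsUnit (δ - (γm ∘L Ring.inverse αm) ∘L βm) →
      Ring.inverse
          (αm - ((βm - (αm ∘L Q) ∘L βp) ∘L Ring.inverse (δ - (γm ∘L Q) ∘L βp)) ∘L γm) =
        Ring.inverse αm +
          ((Ring.inverse αm ∘L (βm - (αm ∘L Q) ∘L βp)) ∘L
            Ring.inverse (δ - (γm ∘L Ring.inverse αm) ∘L βm)) ∘L
              (γm ∘L Ring.inverse αm)) := by
  rw [← schurComplement_sub_comp_eq hαm βm γm δ Q βp]
  exact ⟨isUnit_sub_comp_ringInverse_comp_iff hαm hQ _ _,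
    ringInverse_sub_comp_ringInverse_comp hαm hQ⟩

end Woodbury

/-- If `α₋` and `R(0) = δ − γ₋α₋⁻¹β₋` are invertible, then for every `Q` with
`δ − γ₋Qβ₊` invertible, `α₋° = α₋ − (β₋ − α₋Qβ₊)(δ − γ₋Qβ₊)⁻¹γ₋` is invertible with
`(α₋°)⁻¹ = α₋⁻¹ + α₋⁻¹(β₋ − α₋Qβ₊)(δ − γ₋α₋⁻¹β₋)⁻¹γ₋α₋⁻¹`. -/
theorem alphaMcirc_invertible_of_R0_invertible
    (δ : U →L[ℂ] U) (γp : Xp →L[ℂ] U) (αp : Xp →L[ℂ] Xp) (βp : U →L[ℂ] Xp)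
    (γm : Xm →L[ℂ] U) (αm : Xm →L[ℂ] Xm) (βm : U →L[ℂ] Xm)
    (hαp : spectrum ℂ αp ⊆ ball (0 : ℂ) 1) (hαm : spectrum ℂ αm ⊆ ball (0 : ℂ) 1)
    (hαmUnit : IsUnit αm)
    (hR0 : IsUnit (δ - (γm ∘L Ring.inverse αm) ∘L βm)) :
    ∀ Q : Xp →L[ℂ] Xm, IsUnit (δ - (γm ∘L Q) ∘L βp) →
      IsUnit (αm - ((βm - (αm ∘L Q) ∘L βp) ∘L Ring.inverse (δ - (γm ∘L Q) ∘L βp)) ∘L γm) ∧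
      Ring.inverse
          (αm - ((βm - (αm ∘L Q) ∘L βp) ∘L Ring.inverse (δ - (γm ∘L Q) ∘L βp)) ∘L γm) =
        Ring.inverse αm +
          ((Ring.inverse αm ∘L (βm - (αm ∘L Q) ∘L βp)) ∘L
            Ring.inverse (δ - (γm ∘L Ring.inverse αm) ∘L βm)) ∘L
              (γm ∘L Ring.inverse αm) :=
  fun _ hQ =>
    have h := alphaMcirc_invertible_of_R0_invertible_general hαmUnit hQ
    ⟨h.1.mpr hR0, h.2 hR0⟩
end
end
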